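/- Let ν > 1/2 and λ > 0 and let g be the gamma kernel g(x) = (λ^{ν−1/2}/Γ(2ν−1)^{1/2}) x^{ν−1} e^{−λx/2}. The autocorrelation function ρ(h) = ∫₀^∞ g(t+h)g(t) dt / ∫₀^∞ g(t)² dt of the associated BSS process equals ρ(h) = (1/(2^{ν−3/2} Γ(ν−1/2))) · (λh/2)^{ν−1/2} K_{ν−1/2}(λh/2) for h > 0. -/

import Mathlib

open MeasureTheory Set Real

/-- The modified Bessel function of the third kind (Basset's integral
representation): `K_μ(x) = ∫₀^∞ exp(-x cosh t) cosh(μ t) dt` for `x > 0`. -/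
noncomputable def besselK (μ x : ℝ) : ℝ :=
  ∫ t in Ioi (0:ℝ), Real.exp (-x * Real.cosh t) * Real.cosh (μ * t)

lemma aux_even (G : ℝ → ENNReal) (hG : Measurable G) :
    ∫⁻ t, G t = ∫⁻ t in Ioi (0:ℝ), (G t + G (-t)) := by
  rw [lintegral_add_left hG, ← lintegral_add_compl G (measurableSet_Ioi (a := (0:ℝ)))]
  congr 1
  have h := (Measure.measurePreserving_neg (volume : Measure ℝ)).setLIntegral_comp_preimage
    (measurableSet_Iio (a := (0:ℝ))) hG
  have e : (Neg.neg ⁻¹' (Iio (0:ℝ))) = Ioi 0 := by ext t; simp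
  rw [e] at h
  rw [h, compl_Ioi]
  exact (setLIntegral_congr Iio_ae_eq_Iic).symm

lemma aux_cosh (μ x : ℝ) :
    ∫⁻ t, ENNReal.ofReal (exp (μ * t) * exp (-x * cosh t)) =
      2 * ∫⁻ t in Ioi (0:ℝ), ENNReal.ofReal (exp (-x * cosh t) * cosh (μ * t)) := by
  rw [aux_even _ (by fun_prop), ← lintegral_const_mul' _ _ (by simp)]
  refine lintegral_congr fun t => ?_
  rw [← ENNReal.ofReal_add (by positivity) (by positivity)]
  rw [show (2 : ENNReal) = ENNReal.ofReal 2 by simp, ← ENNReal.ofReal_mul (by norm_num)]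
  congr 1
  rw [cosh_neg, cosh_eq (μ * t), mul_neg]
  ring

lemma aux_half (z : ℝ) (hz : 0 < z) :
    ∫⁻ t, ENNReal.ofReal (exp (t / 2) * exp (-z * cosh t)) =
      ENNReal.ofReal (√(2 * π / z) * exp (-z)) := by
  have h1 := aux_cosh (1 / 2) z
  simp only [show ∀ t : ℝ, 1 / 2 * t = t / 2 by intro t; ring] at h1
  rw [h1]
  have himg : (fun t : ℝ => sinh (t / 2)) '' Ioi 0 = Ioi 0 := by
    ext w
    simp only [mem_image, mem_Ioi]
    constructor
    · rintro ⟨t, ht, rfl⟩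
      exact sinh_pos_iff.2 (by linarith)
    · intro hw
      refine ⟨2 * arsinh w, ?_, ?_⟩
      · have := arsinh_pos_iff.2 hw
        linarith
      · rw [mul_div_cancel_left₀ _ (by norm_num), sinh_arsinh]
  have hcv := lintegral_image_eq_lintegral_abs_deriv_mul (s := Ioi (0:ℝ))
    (f := fun t : ℝ => sinh (t / 2)) (f' := fun t => cosh (t / 2) * (1 / 2)) measurableSet_Ioi
    (fun t _ => (((hasDerivAt_id t).div_const 2).sinh).hasDerivWithinAt)
    (fun a _ b _ hab => by
      have := sinh_injective hab
      linarith)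
    (fun w => ENNReal.ofReal (exp (-(2 * z) * w ^ 2)))
  rw [himg] at hcv
  rw [← ofReal_integral_eq_lintegral_ofReal
    ((integrable_exp_neg_mul_sq (by positivity : 0 < 2 * z)).integrableOn)
    (Filter.Eventually.of_forall fun _ => (exp_pos _).le), integral_gaussian_Ioi] at hcv
  have h2 : ∫⁻ t in Ioi (0:ℝ), ENNReal.ofReal (exp (-z * cosh t) * cosh (t / 2)) =
      ENNReal.ofReal (2 * exp (-z)) * ENNReal.ofReal (√(π / (2 * z)) / 2) := by
    rw [hcv, ← lintegral_const_mul' _ _ ENNReal.ofReal_ne_top]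
    refine lintegral_congr fun t => ?_
    have hc := cosh_pos (t / 2)
    rw [abs_of_pos (by positivity), ← ENNReal.ofReal_mul (by positivity),
      ← ENNReal.ofReal_mul (by positivity)]
    congr 1
    have e : cosh t = 1 + 2 * sinh (t / 2) ^ 2 := by
      have := cosh_two_mul (t / 2)
      rw [mul_div_cancel₀ _ (by norm_num)] at this
      rw [this, cosh_sq]; ring
    rw [e, show -z * (1 + 2 * sinh (t / 2) ^ 2) = -z + -(2 * z) * sinh (t / 2) ^ 2 by ring,
      exp_add]
    ring
  rw [h2, show (2 : ENNReal) = ENNReal.ofReal 2 by simp, ← ENNReal.ofReal_mul (by positivity),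
    ← ENNReal.ofReal_mul (by positivity)]
  congr 1
  have : √(2 * π / z) = 2 * √(π / (2 * z)) := by
    rw [show 2 * π / z = 2 ^ 2 * (π / (2 * z)) by field_simp,
      sqrt_mul (by positivity), sqrt_sq (by norm_num)]
  rw [this]; ring

lemma aux_exp (x u : ℝ) (hx : 0 < x) (hu : 0 < u) :
    ∫⁻ y, ENNReal.ofReal (exp (y / 2) * exp (-(x / 2 * (u ^ 2 * exp y + exp (-y))))) =
      ENNReal.ofReal (√(2 * π / x) / u * exp (-(x * u))) := by
  rw [← lintegral_sub_right_eq_self _ (log u)]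
  have key : ∀ y : ℝ, exp ((y - log u) / 2) *
      exp (-(x / 2 * (u ^ 2 * exp (y - log u) + exp (-(y - log u))))) =
      (1 / √u) * (exp (y / 2) * exp (-(x * u) * cosh y)) := by
    intro y
    have e1 : exp ((y - log u) / 2) = 1 / √u * exp (y / 2) := by
      rw [sub_div, exp_sub, ← log_sqrt hu.le, exp_log (sqrt_pos.2 hu)]; ring
    have e2 : exp (y - log u) = exp y / u := by rw [exp_sub, exp_log hu]
    have e3 : exp (-(y - log u)) = exp (-y) * u := by
      rw [show -(y - log u) = -y + log u by ring, exp_add, exp_log hu]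
    rw [e1, e2, e3, cosh_eq, mul_assoc]
    congr 3
    field_simp
  simp only [key]
  simp only [ENNReal.ofReal_mul (show 0 ≤ 1 / √u by positivity)]
  rw [lintegral_const_mul' _ _ (by simp), aux_half _ (by positivity),
    ← ENNReal.ofReal_mul (by positivity)]
  congr 1
  rw [← div_div, sqrt_div' _ hu.le]
  have := mul_self_sqrt hu.le
  have hs := sqrt_pos.2 hu
  field_simp
  rw [pow_two, this]

lemma aux_inner (a h ν : ℝ) (ha : 0 < a) (hh : 0 < h) (hν : 0 < ν) :
    ∫⁻ t in Ioi (0:ℝ), ENNReal.ofReal ((2 * t + h) * ((t * (t + h)) ^ (ν - 1) *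
      exp (-(a * (t * (t + h)))))) = ENNReal.ofReal ((1 / a) ^ ν * Gamma ν) := by
  have himg : (fun t : ℝ => t * (t + h)) '' Ioi 0 = Ioi 0 := by
    ext w
    simp only [mem_image, mem_Ioi]
    constructor
    · rintro ⟨t, ht, rfl⟩
      positivity
    · intro hw
      have hs : √(h ^ 2 + 4 * w) ^ 2 = h ^ 2 + 4 * w := sq_sqrt (by positivity)
      refine ⟨(√(h ^ 2 + 4 * w) - h) / 2, ?_, ?_⟩
      · have : h < √(h ^ 2 + 4 * w) := lt_sqrt_of_sq_lt (by linarith)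
        linarith
      · nlinarith
  have hcv := lintegral_image_eq_lintegral_abs_deriv_mul (s := Ioi (0:ℝ))
    (f := fun t : ℝ => t * (t + h)) (f' := fun t => 2 * t + h) measurableSet_Ioi
    (fun t _ => by
      have := (hasDerivAt_id t).mul ((hasDerivAt_id t).add_const h)
      refine (this.congr_deriv ?_).hasDerivWithinAt
      simp; ring)
    (fun p hp q hq hpq => by
      simp only [mem_Ioi] at hp hq hpq
      have : (p - q) * (p + q + h) = 0 := by linarith
      rcases mul_eq_zero.1 this with h1 | h1 <;> linarith)
    (fun w => ENNReal.ofReal (w ^ (ν - 1) * exp (-(a * w))))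
  rw [himg] at hcv
  have hint : IntegrableOn (fun w : ℝ => w ^ (ν - 1) * exp (-(a * w))) (Ioi 0) := by
    have := integrableOn_rpow_mul_exp_neg_mul_rpow (p := 1) (s := ν - 1) (b := a)
      (by linarith) (by norm_num) ha
    simpa using this
  rw [← ofReal_integral_eq_lintegral_ofReal hint, integral_rpow_mul_exp_neg_mul_Ioi hν ha] at hcv
  · rw [hcv]
    refine setLIntegral_congr_fun measurableSet_Ioi fun t ht => ?_
    have ht : 0 < t := ht
    rw [abs_of_pos (by positivity), ← ENNReal.ofReal_mul (by positivity)]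
  · filter_upwards [ae_restrict_mem measurableSet_Ioi] with w hw
    have hw : 0 < w := hw
    simp only [Pi.zero_apply]
    positivity

lemma aux_main (x h ν : ℝ) (hx : 0 < x) (hh : 0 < h) (hν : 0 < ν) :
    ∫⁻ t in Ioi (0:ℝ), ENNReal.ofReal ((t * (t + h)) ^ (ν - 1) *
      exp (-(x * ((2 * t + h) / h)))) =
    ENNReal.ofReal (1 / (h * √(2 * π / x)) * ((1 / (2 * x / h ^ 2)) ^ ν * Gamma ν)) *
      ∫⁻ y, ENNReal.ofReal (exp (-(ν - 1 / 2) * y) * exp (-x * cosh y)) := by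
  have hsx : 0 < √(2 * π / x) := sqrt_pos.2 (by positivity)
  set c := 1 / (h * √(2 * π / x)) with hc
  have hcpos : 0 < c := by positivity
  calc _ = ∫⁻ t in Ioi (0:ℝ), ∫⁻ y, ENNReal.ofReal (c * ((2 * t + h) * (t * (t + h)) ^ (ν - 1)) *
        (exp (y / 2) * exp (-(x / 2 * (((2 * t + h) / h) ^ 2 * exp y + exp (-y)))))) := by
        refine setLIntegral_congr_fun measurableSet_Ioi fun t ht => ?_
        have ht : 0 < t := ht
        have hu : 0 < (2 * t + h) / h := by positivity
        have hp : 0 ≤ c * ((2 * t + h) * (t * (t + h)) ^ (ν - 1)) := by positivity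
        simp only [ENNReal.ofReal_mul hp]
        rw [lintegral_const_mul' _ _ (by simp), aux_exp _ _ hx hu, ← ENNReal.ofReal_mul hp]
        congr 1
        rw [hc]
        have : 0 < 2 * t + h := by positivity
        field_simp
    _ = ∫⁻ y, ∫⁻ t in Ioi (0:ℝ), ENNReal.ofReal (c * ((2 * t + h) * (t * (t + h)) ^ (ν - 1)) *
        (exp (y / 2) * exp (-(x / 2 * (((2 * t + h) / h) ^ 2 * exp y + exp (-y)))))) := by
        refine lintegral_lintegral_swap (Measurable.aemeasurable ?_)
        unfold Function.uncurry
        fun_prop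
    _ = ∫⁻ y, ENNReal.ofReal (c * ((1 / (2 * x / h ^ 2)) ^ ν * Gamma ν)) *
          ENNReal.ofReal (exp (-(ν - 1 / 2) * y) * exp (-x * cosh y)) := by
        refine lintegral_congr fun y => ?_
        have ha : 0 < 2 * x / h ^ 2 * exp y := by positivity
        have hi := aux_inner _ h ν ha hh hν
        have hq : 0 ≤ c * (exp (y / 2) * exp (-x * cosh y)) := by positivity
        have hG := Gamma_pos_of_pos hν
        have : ∀ t : ℝ, c * ((2 * t + h) * (t * (t + h)) ^ (ν - 1)) *
            (exp (y / 2) * exp (-(x / 2 * (((2 * t + h) / h) ^ 2 * exp y + exp (-y))))) =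
            c * (exp (y / 2) * exp (-x * cosh y)) * ((2 * t + h) * ((t * (t + h)) ^ (ν - 1) *
              exp (-(2 * x / h ^ 2 * exp y * (t * (t + h)))))) := by
          intro t
          have e : -(x / 2 * (((2 * t + h) / h) ^ 2 * exp y + exp (-y))) =
              -x * cosh y + -(2 * x / h ^ 2 * exp y * (t * (t + h))) := by
            rw [cosh_eq]; field_simp; ring
          rw [e, exp_add]; ring
        simp only [this, ENNReal.ofReal_mul hq]
        rw [lintegral_const_mul' _ _ (by simp), hi, ← ENNReal.ofReal_mul hq,
          ← ENNReal.ofReal_mul (by positivity)]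
        congr 1
        have e2 : (1 / (2 * x / h ^ 2 * exp y)) ^ ν = (1 / (2 * x / h ^ 2)) ^ ν * exp (-ν * y) := by
          rw [one_div, mul_inv, ← exp_neg, mul_rpow (by positivity) (by positivity), ← exp_mul,
            one_div]
          congr 2; ring
        have e3 : exp (-(ν - 1 / 2) * y) = exp (y / 2) * exp (-ν * y) := by
          rw [← exp_add]; congr 1; ring
        rw [e2, e3]; ring
    _ = _ := lintegral_const_mul' _ _ (by simp)

lemma aux_real (x h ν : ℝ) (hx : 0 < x) (hh : 0 < h) (hν : 0 < ν) :
    ∫ t in Ioi (0:ℝ), (t * (t + h)) ^ (ν - 1) * exp (-(x * ((2 * t + h) / h))) =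
    1 / (h * √(2 * π / x)) * ((1 / (2 * x / h ^ 2)) ^ ν * Gamma ν) *
      (2 * besselK (ν - 1 / 2) x) := by
  have hG := Gamma_pos_of_pos hν
  unfold besselK
  rw [integral_eq_lintegral_of_nonneg_ae, aux_main x h ν hx hh hν, aux_cosh, ENNReal.toReal_mul,
    ENNReal.toReal_mul, ENNReal.toReal_ofReal (by positivity), ← integral_eq_lintegral_of_nonneg_ae]
  · simp only [neg_mul, cosh_neg]
    simp
  · exact Filter.Eventually.of_forall fun t => mul_nonneg (exp_pos _).le (cosh_pos _).le
  · exact (by fun_prop : Measurable _).aestronglyMeasurable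
  · filter_upwards [ae_restrict_mem measurableSet_Ioi] with w hw
    have hw : 0 < w := hw
    simp only [Pi.zero_apply]
    positivity
  · exact (by fun_prop : Measurable _).aestronglyMeasurable

theorem gamma_kernel_BSS_autocorrelation (ν lam h : ℝ) (hν : 1 / 2 < ν)
    (hlam : 0 < lam) (hh : 0 < h) :
    let g : ℝ → ℝ := fun x =>
      lam ^ (ν - 1 / 2) / (Real.Gamma (2 * ν - 1)) ^ ((1:ℝ) / 2) *
        x ^ (ν - 1) * Real.exp (-lam * x / 2)
    (∫ t in Ioi (0:ℝ), g (t + h) * g t) / (∫ t in Ioi (0:ℝ), (g t) ^ 2)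
      = 1 / ((2:ℝ) ^ (ν - 3 / 2) * Real.Gamma (ν - 1 / 2)) *
          (lam * h / 2) ^ (ν - 1 / 2) * besselK (ν - 1 / 2) (lam * h / 2) := by
  intro g
  have hG1 : 0 < Gamma (2 * ν - 1) := Gamma_pos_of_pos (by linarith)
  have hG2 : 0 < Gamma (ν - 1 / 2) := Gamma_pos_of_pos (by linarith)
  have hG3 : 0 < Gamma ν := Gamma_pos_of_pos (by linarith)
  set A := lam ^ (ν - 1 / 2) / (Real.Gamma (2 * ν - 1)) ^ ((1:ℝ) / 2) with hA
  have hApos : 0 < A := by positivity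
  have hx : 0 < lam * h / 2 := by positivity
  have hnum : ∫ t in Ioi (0:ℝ), g (t + h) * g t = A ^ 2 *
      (1 / (h * √(2 * π / (lam * h / 2))) *
        ((1 / (2 * (lam * h / 2) / h ^ 2)) ^ ν * Gamma ν) *
      (2 * besselK (ν - 1 / 2) (lam * h / 2))) := by
    rw [← aux_real _ h ν hx hh (by linarith), ← integral_const_mul]
    refine setIntegral_congr_fun measurableSet_Ioi fun t ht => ?_
    have ht : 0 < t := ht
    simp only [g]
    rw [mul_rpow ht.le (by positivity)]
    have : exp (-(lam * h / 2 * ((2 * t + h) / h))) =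
        exp (-lam * (t + h) / 2) * exp (-lam * t / 2) := by
      rw [← exp_add]; congr 1; field_simp; ring
    rw [this]; ring
  have hden : ∫ t in Ioi (0:ℝ), (g t) ^ 2 =
      A ^ 2 * ((1 / lam) ^ (2 * ν - 1) * Gamma (2 * ν - 1)) := by
    rw [← integral_rpow_mul_exp_neg_mul_Ioi (by linarith) hlam, ← integral_const_mul]
    refine setIntegral_congr_fun measurableSet_Ioi fun t ht => ?_
    have ht : 0 < t := ht
    simp only [g]
    have e1 : t ^ (2 * ν - 1 - 1) = (t ^ (ν - 1)) ^ 2 := by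
      rw [← rpow_mul_natCast ht.le]; congr 1; push_cast; ring
    have e2 : exp (-(lam * t)) = exp (-lam * t / 2) ^ 2 := by
      rw [← exp_nat_mul]; congr 1; push_cast; ring
    rw [e1, e2]; ring
  rw [hnum, hden, mul_div_mul_left _ _ (by positivity)]
  have hdup := Gamma_mul_Gamma_add_half (ν - 1 / 2)
  rw [sub_add_cancel, show 2 * (ν - 1 / 2) = 2 * ν - 1 by ring] at hdup
  have hG3' : Gamma ν = Gamma (2 * ν - 1) * 2 ^ (1 - (2 * ν - 1)) * √π / Gamma (ν - 1 / 2) := by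
    rw [← hdup, mul_div_cancel_left₀ _ hG2.ne']
  have hr : 1 / (h * √(2 * π / (lam * h / 2))) * (1 / (2 * (lam * h / 2) / h ^ 2)) ^ ν *
      (2 ^ (1 - (2 * ν - 1)) * √π) * 2 =
      1 / (2:ℝ) ^ (ν - 3 / 2) * (lam * h / 2) ^ (ν - 1 / 2) * (1 / lam) ^ (2 * ν - 1) := by
    have hs : √(2 * π / (lam * h / 2)) = √π * (2 / (lam ^ (1 / 2 : ℝ) * h ^ (1 / 2 : ℝ))) := by
      rw [show 2 * π / (lam * h / 2) = π * (2 ^ 2 / (lam * h)) by field_simp,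
        sqrt_mul (by positivity), sqrt_div (by positivity), sqrt_sq (by norm_num),
        sqrt_eq_rpow (lam * h), mul_rpow hlam.le hh.le]
    have hb : 1 / (2 * (lam * h / 2) / h ^ 2) = h / lam := by field_simp
    have hpi : 0 < √π := sqrt_pos.2 pi_pos
    rw [hs, hb]
    have : 1 / (h * (√π * (2 / (lam ^ (1 / 2 : ℝ) * h ^ (1 / 2 : ℝ))))) * (h / lam) ^ ν *
      (2 ^ (1 - (2 * ν - 1)) * √π) * 2 =
      1 / h * (lam ^ (1 / 2 : ℝ) * h ^ (1 / 2 : ℝ)) * (h / lam) ^ ν * 2 ^ (1 - (2 * ν - 1)) := by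
      field_simp
    rw [this]
    refine log_injOn_pos (mem_Ioi.2 (by positivity)) (mem_Ioi.2 (by positivity)) ?_
    rw [log_mul (by positivity) (by positivity), log_mul (by positivity) (by positivity),
      log_mul (by positivity) (by positivity), log_mul (by positivity) (by positivity),
      log_mul (by positivity) (by positivity), log_mul (by positivity) (by positivity),
      log_div (by positivity) (by positivity), log_div (by positivity) (by positivity),
      log_rpow (by positivity), log_rpow (by positivity), log_rpow (by positivity),
      log_rpow (by positivity), log_rpow (by positivity), log_rpow (by positivity),
      log_rpow (by positivity), log_div (by positivity) (by positivity),
      log_div (by positivity) (by positivity), log_div (by positivity) (by positivity),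
      log_mul (by positivity) (by positivity), log_one]
    ring
  rw [div_eq_iff (by positivity), hG3']
  calc _ = (1 / (h * √(2 * π / (lam * h / 2))) * (1 / (2 * (lam * h / 2) / h ^ 2)) ^ ν *
      (2 ^ (1 - (2 * ν - 1)) * √π) * 2) * (Gamma (2 * ν - 1) / Gamma (ν - 1 / 2) *
        besselK (ν - 1 / 2) (lam * h / 2)) := by ring
    _ = _ := by
      rw [hr]
      field_simp
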